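/- arXiv:2601.11463 — 6 statements merged into one kernel-verified Lean document; each statement's English description precedes it below -/
import Mathlib

section
/- Let K and L be compact Hausdorff spaces and suppose there exists a positive isomorphic embedding T : C(K) → C(L). Then for every ordinal α, if the α-th Cantor–Bendixson derivative K^(α) is nonempty, then L^(α) is nonempty as well; in particular, if L is scattered then K is scattered and ht(K) ≤ ht(L). -/
open Ordinal Set

/-- The Cantor–Bendixson derivative of order `o` of a topological space `X`:
`cbDeriv X 0 = univ`, `cbDeriv X (o+1)` is the set of accumulation points of `cbDeriv X o`,
and at limit ordinals we take the intersection of the previous derivatives. -/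
noncomputable def cbDeriv (X : Type*) [TopologicalSpace X] : Ordinal.{0} → Set X :=
  fun o => Ordinal.limitRecOn o Set.univ
    (fun _ ih => derivedSet ih)
    (fun o _ ih => ⋂ (β : Ordinal) (h : β < o), ih β h)

/-- A space is scattered if some Cantor–Bendixson derivative is empty. -/
def Scattered (X : Type*) [TopologicalSpace X] : Prop :=
  ∃ o : Ordinal.{0}, cbDeriv X o = ∅

/-- The Cantor–Bendixson height: the least ordinal whose derivative is empty. -/
noncomputable def cbHeight (X : Type*) [TopologicalSpace X] : Ordinal.{0} :=
  sInf {o : Ordinal | cbDeriv X o = ∅}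

open Filter Topology

theorem cbDeriv_zero' (X : Type*) [TopologicalSpace X] : cbDeriv X 0 = Set.univ := by
  simp [cbDeriv]

theorem cbDeriv_succ' (X : Type*) [TopologicalSpace X] (o : Ordinal.{0}) :
    cbDeriv X (o + 1) = derivedSet (cbDeriv X o) := by
  simp [cbDeriv]

theorem cbDeriv_limit' (X : Type*) [TopologicalSpace X] (o : Ordinal.{0})
    (ho : Order.IsSuccLimit o) :
    cbDeriv X o = ⋂ (β : Ordinal) (_ : β < o), cbDeriv X β := by
  unfold cbDeriv
  rw [Ordinal.limitRecOn_limit (h := ho)]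

theorem cbDeriv_closed (X : Type*) [TopologicalSpace X] [T1Space X] (o : Ordinal.{0}) :
    IsClosed (cbDeriv X o) := by
  induction o using Ordinal.limitRecOn with
  | zero => rw [cbDeriv_zero']; exact isClosed_univ
  | add_one o ih => rw [cbDeriv_succ']; exact isClosed_derivedSet _
  | limit o ho ih =>
    rw [cbDeriv_limit' X o ho]
    exact isClosed_iInter fun β => isClosed_iInter fun h => ih β h

theorem cbDeriv_anti (X : Type*) [TopologicalSpace X] [T1Space X] (o : Ordinal.{0}) :
    ∀ β ≤ o, cbDeriv X o ⊆ cbDeriv X β := by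
  induction o using Ordinal.limitRecOn with
  | zero =>
    intro β hβ
    have : β = 0 := le_antisymm hβ (zero_le)
    rw [this]
  | add_one o ih =>
    intro β hβ
    rcases hβ.eq_or_lt with h | h
    · rw [h]
    · refine Subset.trans ?_ (ih β (Order.lt_add_one_iff.1 h))
      rw [cbDeriv_succ']
      exact (isClosed_iff_derivedSet_subset _).1 (cbDeriv_closed X o)
  | limit o ho ih =>
    intro β hβ
    rcases hβ.eq_or_lt with h | h
    · rw [h]
    · rw [cbDeriv_limit' X o ho]
      exact iInter₂_subset β h

section

variable {K L : Type*} [TopologicalSpace K] [CompactSpace K] [T2Space K]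
    [TopologicalSpace L] [CompactSpace L] [T2Space L]

/-- Points `y` whose associated measure has mass at least `c` at `x`. -/
def phiSet (T : C(K, ℝ) →L[ℝ] C(L, ℝ)) (c : ℝ) (x : K) : Set L :=
  {y | ∀ f : C(K, ℝ), 0 ≤ f → 1 < f x → c ≤ T f y}

theorem T_mono (T : C(K, ℝ) →L[ℝ] C(L, ℝ)) (hpos : ∀ f : C(K, ℝ), 0 ≤ f → 0 ≤ T f)
    {f g : C(K, ℝ)} (h : f ≤ g) (y : L) : T f y ≤ T g y := by
  have h1 := hpos (g - f) (sub_nonneg.2 h)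
  rw [map_sub] at h1
  have h2 := h1 y
  simpa using h2

theorem phiSet_graph_closed (T : C(K, ℝ) →L[ℝ] C(L, ℝ)) (c : ℝ) :
    IsClosed {p : K × L | p.2 ∈ phiSet T c p.1} := by
  have : {p : K × L | p.2 ∈ phiSet T c p.1} =
      ⋂ (f : C(K, ℝ)) (_ : 0 ≤ f), ({p : K × L | f p.1 ≤ 1} ∪ {p : K × L | c ≤ T f p.2}) := by
    ext p
    simp only [phiSet, mem_ofPred_eq, mem_iInter, mem_union]
    refine forall_congr' fun f => forall_congr' fun _ => ?_
    rw [← not_lt (a := (1:ℝ)), ← imp_iff_not_or]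
  rw [this]
  refine isClosed_iInter fun f => isClosed_iInter fun _ => IsClosed.union ?_ ?_
  · exact isClosed_le (by fun_prop) continuous_const
  · exact isClosed_le continuous_const (by fun_prop)

theorem phiSet_closed (T : C(K, ℝ) →L[ℝ] C(L, ℝ)) (c : ℝ) (x : K) :
    IsClosed (phiSet T c x) :=
  (phiSet_graph_closed T c).preimage (f := fun y : L => (x, y)) (by fun_prop)

theorem phiSet_nonempty (T : C(K, ℝ) →L[ℝ] C(L, ℝ)) (hpos : ∀ f : C(K, ℝ), 0 ≤ f → 0 ≤ T f)
    (c : ℝ) (hc : 0 < c) (hemb : ∀ f : C(K, ℝ), c * ‖f‖ ≤ ‖T f‖) (x : K) :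
    (phiSet T c x).Nonempty := by
  let I := {f : C(K, ℝ) // 0 ≤ f ∧ 1 < f x}
  have : Nonempty I := ⟨⟨ContinuousMap.const K 2, fun _ => by simp, by simp⟩⟩
  have key := IsCompact.nonempty_iInter_of_directed_nonempty_isCompact_isClosed
    (fun f : I => {y : L | c ≤ T f.1 y}) ?_ ?_ ?_ ?_
  · obtain ⟨y, hy⟩ := key
    exact ⟨y, fun f h1 h2 => mem_iInter.1 hy ⟨f, h1, h2⟩⟩
  · intro f g
    refine ⟨⟨f.1 ⊓ g.1, le_inf f.2.1 g.2.1, ?_⟩, ?_, ?_⟩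
    · simpa using ⟨f.2.2, g.2.2⟩
    · intro y (hy : c ≤ _)
      exact hy.trans (T_mono T hpos inf_le_left y)
    · intro y (hy : c ≤ _)
      exact hy.trans (T_mono T hpos inf_le_right y)
  · intro f
    by_contra hne
    have hlt : ∀ y, T f.1 y < c := fun y => by
      by_contra h
      exact hne ⟨y, not_lt.1 h⟩
    have h1 : ‖T f.1‖ < c := by
      rw [ContinuousMap.norm_lt_iff _ hc]
      intro y
      have h0 : 0 ≤ T f.1 y := hpos f.1 f.2.1 y
      rw [Real.norm_of_nonneg h0]
      exact hlt y
    have h2 : 1 ≤ ‖f.1‖ := (f.2.2.le.trans (le_abs_self _)).trans (f.1.norm_coe_le_norm x)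
    have h3 := hemb f.1
    nlinarith
  · intro f
    exact (isClosed_le continuous_const (by fun_prop)).isCompact
  · intro f
    exact isClosed_le continuous_const (by fun_prop)

theorem phiSet_card (T : C(K, ℝ) →L[ℝ] C(L, ℝ)) (hpos : ∀ f : C(K, ℝ), 0 ≤ f → 0 ≤ T f)
    (c : ℝ) (y : L) (s : Finset K) (hs : ∀ x ∈ s, y ∈ phiSet T c x) :
    s.card * c ≤ T (ContinuousMap.const K 2) y := by
  classical
  obtain ⟨U, hU, hd⟩ := s.finite_toSet.t2_separation
  have hf : ∀ x : K, ∃ f : C(K, ℝ), EqOn f 0 (U x)ᶜ ∧ EqOn f 2 {x} ∧ ∀ z, f z ∈ Icc (0:ℝ) 2 := by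
    intro x
    obtain ⟨f, h0, h1, h2⟩ := exists_continuous_zero_one_of_isClosed
      (s := (U x)ᶜ) (t := {x}) (hU x).2.isClosed_compl isClosed_singleton
      (by simpa using (hU x).1)
    refine ⟨(2 : ℝ) • f, fun z hz => ?_, fun z hz => ?_, fun z => ?_⟩
    · simp [h0 hz]
    · simp [h1 hz]
    · have := h2 z
      simp only [ContinuousMap.coe_smul, Pi.smul_apply, _root_.smul_eq_mul, mem_Icc] at this ⊢
      constructor <;> linarith [this.1, this.2]
  choose f h0 h2 h01 using hf
  have hle : ∑ x ∈ s, f x ≤ ContinuousMap.const K 2 := by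
    intro z
    change (∑ x ∈ s, f x) z ≤ 2
    rw [ContinuousMap.coe_sum, Finset.sum_apply]
    by_cases hz : ∃ x ∈ s, z ∈ U x
    · obtain ⟨x, hx, hzx⟩ := hz
      rw [Finset.sum_eq_single_of_mem x hx]
      · exact (h01 x z).2
      · intro x' hx' hne
        refine h0 x' fun hz' => ?_
        exact (disjoint_left.1 (hd hx' hx hne)) hz' hzx
    · push Not at hz
      rw [Finset.sum_eq_zero fun x hx => h0 x (hz x hx)]
      norm_num
  refine le_trans ?_ (T_mono T hpos hle y)
  rw [map_sum, ContinuousMap.coe_sum, Finset.sum_apply, ← _root_.nsmul_eq_mul]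
  refine Finset.card_nsmul_le_sum _ _ _ fun x hx => hs x hx (f x) (fun z => (h01 x z).1) ?_
  rw [h2 x (mem_singleton x)]
  simp

theorem phiSet_finite (T : C(K, ℝ) →L[ℝ] C(L, ℝ)) (hpos : ∀ f : C(K, ℝ), 0 ≤ f → 0 ≤ T f)
    (c : ℝ) (hc : 0 < c) (y : L) : {x | y ∈ phiSet T c x}.Finite := by
  by_contra hinf
  obtain ⟨n, hn⟩ := exists_nat_gt (T (ContinuousMap.const K 2) y / c)
  obtain ⟨s, hs, hcard⟩ := Set.Infinite.exists_subset_card_eq hinf n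
  have := phiSet_card T hpos c y s (fun x hx => hs hx)
  rw [hcard] at this
  rw [div_lt_iff₀ hc] at hn
  linarith

theorem phiSet_cb (T : C(K, ℝ) →L[ℝ] C(L, ℝ)) (hpos : ∀ f : C(K, ℝ), 0 ≤ f → 0 ≤ T f)
    (c : ℝ) (hc : 0 < c) (hemb : ∀ f : C(K, ℝ), c * ‖f‖ ≤ ‖T f‖) (α : Ordinal.{0}) :
    ∀ x ∈ cbDeriv K α, (phiSet T c x ∩ cbDeriv L α).Nonempty := by
  induction α using Ordinal.limitRecOn with
  | zero =>
    intro x _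
    rw [cbDeriv_zero', inter_univ]
    exact phiSet_nonempty T hpos c hc hemb x
  | add_one α ih =>
    intro x hx
    rw [cbDeriv_succ'] at hx ⊢
    have hne : (𝓝[≠] x ⊓ 𝓟 (cbDeriv K α)).NeBot := hx
    set F := 𝓝[≠] x ⊓ 𝓟 (cbDeriv K α) with hF
    have hL : Nonempty L := ⟨(phiSet_nonempty T hpos c hc hemb x).some⟩
    have hex : ∀ a : K, ∃ y : L, a ∈ cbDeriv K α → y ∈ phiSet T c a ∩ cbDeriv L α := by
      intro a
      by_cases ha : a ∈ cbDeriv K α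
      · obtain ⟨y, hy⟩ := ih a ha
        exact ⟨y, fun _ => hy⟩
      · exact ⟨hL.some, fun h => absurd h ha⟩
    choose g hg using hex
    have hFx : F ≤ 𝓝 x := inf_le_left.trans nhdsWithin_le_nhds
    have hFA : ∀ᶠ a in F, a ∈ cbDeriv K α := inf_le_right (a := 𝓝[≠] x) (mem_principal_self _)
    have hFne : ∀ᶠ a in F, a ≠ x := inf_le_left (a := 𝓝[≠] x) self_mem_nhdsWithin
    obtain ⟨y, hy⟩ := exists_clusterPt_of_compactSpace (map g F)
    have hfreq : ∀ V ∈ 𝓝 y, ∃ᶠ a in F, g a ∈ V := fun V hV =>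
      (mapClusterPt_iff_frequently.1 hy) V hV
    refine ⟨y, ?_, ?_⟩
    · have hcl := phiSet_graph_closed T c
      have : (x, y) ∈ closure {p : K × L | p.2 ∈ phiSet T c p.1} := by
        rw [mem_closure_iff_nhds]
        intro W hW
        obtain ⟨U, hU, V, hV, hUV⟩ := mem_nhds_prod_iff.1 hW
        obtain ⟨a, haV, haU, haA⟩ := ((hfreq V hV).and_eventually
          (Filter.Eventually.and (hFx hU) hFA)).exists
        exact ⟨(a, g a), hUV ⟨haU, haV⟩, (hg a haA).1⟩
      rw [hcl.closure_eq] at this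
      exact this
    · rw [mem_derivedSet, accPt_iff_nhds]
      intro V hV
      have hfin := (phiSet_finite T hpos c hc y).subset
        (sdiff_subset : {x | y ∈ phiSet T c x} \ {x} ⊆ _)
      have hev : ∀ᶠ a in F, a ∉ {x | y ∈ phiSet T c x} \ {x} :=
        hFx (hfin.isClosed.isOpen_compl.mem_nhds (by simp))
      obtain ⟨a, haV, haS, haA, hax⟩ := ((hfreq V hV).and_eventually
          (hev.and (hFA.and hFne))).exists
      refine ⟨g a, ⟨haV, (hg a haA).2⟩, fun h => haS ⟨?_, hax⟩⟩
      have := (hg a haA).1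
      rw [h] at this
      exact this
  | limit α hα ih =>
    intro x hx
    have : Nonempty (Iio α) := ⟨⟨0, hα.bot_lt⟩⟩
    have key := IsCompact.nonempty_iInter_of_directed_nonempty_isCompact_isClosed
      (fun β : Iio α => phiSet T c x ∩ cbDeriv L β.1) ?_ ?_ ?_ ?_
    · obtain ⟨y, hy⟩ := key
      rw [mem_iInter] at hy
      refine ⟨y, (hy this.some).1, ?_⟩
      rw [cbDeriv_limit' L α hα]
      exact mem_iInter₂.2 fun β hβ => (hy ⟨β, hβ⟩).2
    · intro a b
      refine ⟨max a b, ?_, ?_⟩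
      · exact inter_subset_inter_right _ (cbDeriv_anti L _ _ (le_max_left a b))
      · exact inter_subset_inter_right _ (cbDeriv_anti L _ _ (le_max_right a b))
    · intro β
      exact ih β.1 β.2 x (cbDeriv_anti K α β.1 β.2.le hx)
    · intro β
      exact ((phiSet_closed T c x).inter (cbDeriv_closed L _)).isCompact
    · intro β
      exact (phiSet_closed T c x).inter (cbDeriv_closed L _)

end

/-- If there is a positive isomorphic embedding `T : C(K) → C(L)` between spaces of
continuous real functions on compact Hausdorff spaces, then every nonempty
Cantor–Bendixson derivative of `K` forces the corresponding derivative of `L` to be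
nonempty; in particular if `L` is scattered then so is `K` and `ht(K) ≤ ht(L)`. -/
theorem stmt_0 {K L : Type*} [TopologicalSpace K] [CompactSpace K] [T2Space K]
    [TopologicalSpace L] [CompactSpace L] [T2Space L]
    (T : C(K, ℝ) →L[ℝ] C(L, ℝ))
    (hpos : ∀ f : C(K, ℝ), 0 ≤ f → 0 ≤ T f)
    (hemb : ∃ c : ℝ, 0 < c ∧ ∀ f : C(K, ℝ), c * ‖f‖ ≤ ‖T f‖) :
    (∀ α : Ordinal, (cbDeriv K α).Nonempty → (cbDeriv L α).Nonempty) ∧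
      (Scattered L → Scattered K ∧ cbHeight K ≤ cbHeight L) := by
  obtain ⟨c, hc, hemb⟩ := hemb
  have h1 : ∀ α : Ordinal.{0}, (cbDeriv K α).Nonempty → (cbDeriv L α).Nonempty := by
    rintro α ⟨x, hx⟩
    obtain ⟨y, hy⟩ := phiSet_cb T hpos c hc hemb α x hx
    exact ⟨y, hy.2⟩
  have h2 : ∀ α : Ordinal.{0}, cbDeriv L α = ∅ → cbDeriv K α = ∅ := by
    intro α h
    by_contra hne
    have := h1 α (nonempty_iff_ne_empty.2 hne)
    rw [h] at this
    exact not_nonempty_empty this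
  refine ⟨h1, ?_⟩
  rintro ⟨o, ho⟩
  refine ⟨⟨o, h2 o ho⟩, ?_⟩
  have hm : cbHeight L ∈ {o : Ordinal | cbDeriv L o = ∅} := csInf_mem ⟨o, ho⟩
  exact csInf_le' (h2 _ hm)
end

section
/- For each n ∈ ℕ with n ≥ 1, let Δ_n = {(λ₁, …, λ_n) ∈ (0,1]^n : λ₁ + ⋯ + λ_n = 1} and define C(n) = inf over λ ∈ Δ_n of max( 2/λ₁ − 1, max_{i=2,…,n} (2/λ_i + 1) ). Then C(n) = n + √((n−1)(n+3)), and the infimum is attained (namely at λ₁ = ((n+1) − √((n−1)(n+3)))/2 and λ₂ = ⋯ = λ_n = (1−λ₁)/(n−1)). -/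
/-- For `n ≥ 1`, the infimum over the simplex
`Δ_n = {λ ∈ (0,1]^n : Σ λᵢ = 1}` of
`max (2/λ₁ - 1, max_{i≥2} (2/λᵢ + 1))` equals `n + √((n-1)(n+3))`,
and it is attained, namely at `λ₁ = ((n+1) - √((n-1)(n+3)))/2`,
`λᵢ = (1 - λ₁)/(n-1)` for `i ≥ 2`. -/
theorem stmt_5 (n : ℕ) (hn : 1 ≤ n) :
    haveI : Nonempty (Fin n) := ⟨⟨0, hn⟩⟩
    let Cn : ℝ := (n : ℝ) + Real.sqrt (((n : ℝ) - 1) * ((n : ℝ) + 3))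
    let F : (Fin n → ℝ) → ℝ := fun l =>
      Finset.univ.sup' Finset.univ_nonempty
        (fun i : Fin n => if i.val = 0 then 2 / l i - 1 else 2 / l i + 1)
    let x₀ : ℝ := ((n : ℝ) + 1 - Real.sqrt (((n : ℝ) - 1) * ((n : ℝ) + 3))) / 2
    let l₀ : Fin n → ℝ := fun i => if i.val = 0 then x₀ else (1 - x₀) / ((n : ℝ) - 1)
    IsLeast {r : ℝ | ∃ l : Fin n → ℝ,
        (∀ i, l i ∈ Set.Ioc (0 : ℝ) 1) ∧ (∑ i, l i) = 1 ∧ r = F l} Cn ∧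
      (∀ i, l₀ i ∈ Set.Ioc (0 : ℝ) 1) ∧ (∑ i, l₀ i) = 1 ∧ F l₀ = Cn := by
  intro Cn F x₀ l₀
  have hne : Nonempty (Fin n) := ⟨⟨0, hn⟩⟩
  have hn1 : (1 : ℝ) ≤ n := by exact_mod_cast hn
  have hs0 : 0 ≤ Real.sqrt (((n : ℝ) - 1) * ((n : ℝ) + 3)) := Real.sqrt_nonneg _
  have hs2 : Real.sqrt (((n : ℝ) - 1) * ((n : ℝ) + 3)) ^ 2 = ((n : ℝ) - 1) * ((n : ℝ) + 3) :=
    Real.sq_sqrt (mul_nonneg (by linarith) (by linarith))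
  have hC : Cn = (n : ℝ) + Real.sqrt (((n : ℝ) - 1) * ((n : ℝ) + 3)) := rfl
  have hx : x₀ = ((n : ℝ) + 1 - Real.sqrt (((n : ℝ) - 1) * ((n : ℝ) + 3))) / 2 := rfl
  generalize Real.sqrt (((n : ℝ) - 1) * ((n : ℝ) + 3)) = s at hs0 hs2 hC hx
  have hCx : x₀ = 2 / (Cn + 1) := by
    rw [hx, hC, div_eq_div_iff (by norm_num) (by linarith)]
    nlinarith
  have hbig : ∀ i : Fin n, i.val ≠ 0 → (2 : ℝ) ≤ n := by
    intro i hi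
    have : 2 ≤ n := by omega
    exact_mod_cast this
  have hCy : ∀ i : Fin n, i.val ≠ 0 → (1 - x₀) / ((n : ℝ) - 1) = 2 / (Cn - 1) := by
    intro i hi
    have h2 := hbig i hi
    rw [hx, hC, div_eq_div_iff (by linarith) (by linarith)]
    nlinarith
  have hmem : ∀ i, l₀ i ∈ Set.Ioc (0 : ℝ) 1 := by
    intro i
    by_cases hi : i.val = 0
    · have : l₀ i = 2 / (Cn + 1) := by simp only [l₀, if_pos hi]; exact hCx
      rw [this]
      exact ⟨div_pos (by norm_num) (by linarith), (div_le_one (by linarith)).2 (by linarith)⟩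
    · have h2 := hbig i hi
      have : l₀ i = 2 / (Cn - 1) := by simp only [l₀, if_neg hi]; exact hCy i hi
      have h3 : 1 ≤ s := by nlinarith
      rw [this]
      exact ⟨div_pos (by norm_num) (by linarith), (div_le_one (by linarith)).2 (by linarith)⟩
  have hval : ∀ i : Fin n, (if i.val = 0 then 2 / l₀ i - 1 else 2 / l₀ i + 1) = Cn := by
    intro i
    by_cases hi : i.val = 0
    · have : l₀ i = 2 / (Cn + 1) := by simp only [l₀, if_pos hi]; exact hCx
      rw [if_pos hi, this, div_div_cancel₀ (by norm_num)]; ring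
    · have : l₀ i = 2 / (Cn - 1) := by simp only [l₀, if_neg hi]; exact hCy i hi
      rw [if_neg hi, this, div_div_cancel₀ (by norm_num)]; ring
  have hsum : (∑ i, l₀ i) = 1 := by
    clear_value x₀ Cn
    clear hval hmem hCy hbig F
    obtain ⟨m, rfl⟩ : ∃ m, n = m + 1 := ⟨n - 1, by omega⟩
    rw [Fin.sum_univ_succ]
    simp only [l₀, Fin.val_zero, Fin.val_succ, if_true, Nat.succ_ne_zero, if_false,
      Finset.sum_const, Finset.card_univ, Fintype.card_fin, nsmul_eq_mul]
    rcases Nat.eq_zero_or_pos m with rfl | hm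
    · have : s = 0 := by
        have : s ^ 2 = 0 := by rw [hs2]; norm_num
        exact pow_eq_zero_iff (two_ne_zero) |>.1 this
      rw [hx, this]; norm_num
    · have : (m : ℝ) ≠ 0 := by positivity
      push_cast
      rw [add_sub_cancel_right, mul_div_cancel₀ _ this]; ring
  have hF : F l₀ = Cn := by
    simp only [F, hval]
    exact Finset.sup'_const _ _
  refine ⟨⟨⟨l₀, hmem, hsum, hF.symm⟩, ?_⟩, hmem, hsum, hF⟩
  rintro r ⟨l, hl, hls, rfl⟩
  obtain ⟨i, -, hi⟩ := Finset.exists_le_of_sum_le (s := Finset.univ) (f := l) (g := l₀)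
    Finset.univ_nonempty (by rw [hls, hsum])
  have h1 : 2 / l₀ i ≤ 2 / l i := div_le_div_of_nonneg_left (by norm_num) (hl i).1 hi
  refine le_trans ?_ (Finset.le_sup' (fun i : Fin n => if i.val = 0 then 2 / l i - 1 else 2 / l i + 1)
    (Finset.mem_univ i))
  rw [← hval i]
  split_ifs <;> linarith
end

section
/- Let K and L be compact Hausdorff spaces and T : C(K) → C(L) a positive isomorphic embedding. Let 𝒰 be a point-bounded family of nonempty open subsets of K, and for each U ∈ 𝒰 let f_U ∈ C(K, [0,1]) be a function of norm 1 vanishing outside U. Then for each ε with 0 < ε < 1/‖T⁻¹‖, the family { {y ∈ L : Tf_U(y) ≥ ε} : U ∈ 𝒰 } is a point-bounded family of compact subsets of L, each having nonempty interior. -/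
open Set

/-- Let `T : C(K) → C(L)` be a positive embedding (bounded below by `c > 0`,
so that `ε < c ≤ 1/‖T⁻¹‖` is permitted), let `𝒰` be a point-bounded family of nonempty
open subsets of `K` (of order at most `k`), and for each `U ∈ 𝒰` let `f U` be a norm-one
`[0,1]`-valued continuous function vanishing outside `U`. Then for `0 < ε < c` the sets
`{y ∈ L : ε ≤ T(f U)(y)}`, `U ∈ 𝒰`, are compact with nonempty interior, and the family
is point-bounded. -/
theorem stmt_15 {K L : Type*} [TopologicalSpace K] [CompactSpace K] [T2Space K]
    [TopologicalSpace L] [CompactSpace L] [T2Space L]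
    (T : C(K, ℝ) →L[ℝ] C(L, ℝ))
    (hpos : ∀ f : C(K, ℝ), 0 ≤ f → 0 ≤ T f)
    (c : ℝ) (hc : 0 < c) (hemb : ∀ f : C(K, ℝ), c * ‖f‖ ≤ ‖T f‖)
    (𝒰 : Set (Set K)) (h𝒰 : ∀ U ∈ 𝒰, U.Nonempty ∧ IsOpen U)
    (k : ℕ) (hpb : ∀ x : K, {U ∈ 𝒰 | x ∈ U}.Finite ∧ {U ∈ 𝒰 | x ∈ U}.ncard ≤ k)
    (f : Set K → C(K, ℝ))
    (hf : ∀ U ∈ 𝒰, (∀ x : K, f U x ∈ Set.Icc (0 : ℝ) 1) ∧ ‖f U‖ = 1 ∧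
      ∀ x ∉ U, f U x = 0)
    (ε : ℝ) (hε0 : 0 < ε) (hεc : ε < c) :
    (∀ U ∈ 𝒰, IsCompact {y : L | ε ≤ T (f U) y} ∧
      (interior {y : L | ε ≤ T (f U) y}).Nonempty) ∧
    ∃ m : ℕ, ∀ y : L, {U ∈ 𝒰 | ε ≤ T (f U) y}.Finite ∧
      {U ∈ 𝒰 | ε ≤ T (f U) y}.ncard ≤ m := by
  have key : ∀ y : L, ∀ F : Finset (Set K), (↑F : Set (Set K)) ⊆ {U ∈ 𝒰 | ε ≤ T (f U) y} →
      F.card ≤ ⌊(k * ‖T 1‖) / ε⌋₊ := by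
    classical
    intro y F hF
    have h1 : ∀ x : K, ∑ U ∈ F, f U x ≤ k := by
      intro x
      have hsub : (↑(F.filter (fun U => x ∈ U)) : Set (Set K)) ⊆ {U ∈ 𝒰 | x ∈ U} := by
        intro U hU
        have hU' := Finset.mem_filter.1 (Finset.mem_coe.1 hU)
        exact ⟨(hF (Finset.mem_coe.2 hU'.1)).1, hU'.2⟩
      have hcard : (F.filter (fun U => x ∈ U)).card ≤ k := by
        rw [← Set.ncard_coe_finset]
        exact (Set.ncard_le_ncard hsub (hpb x).1).trans (hpb x).2
      calc ∑ U ∈ F, f U x ≤ ∑ U ∈ F, (if x ∈ U then (1 : ℝ) else 0) := by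
            refine Finset.sum_le_sum fun U hU => ?_
            have hU' := hf U (hF (Finset.mem_coe.2 hU)).1
            split_ifs with hx
            · exact (hU'.1 x).2
            · exact (hU'.2.2 x hx).le
        _ = ((F.filter (fun U => x ∈ U)).card : ℝ) := by simp
        _ ≤ k := by exact_mod_cast hcard
    have h2 : 0 ≤ T ((k : ℝ) • (1 : C(K, ℝ)) - ∑ U ∈ F, f U) := by
      apply hpos
      intro x
      have := h1 x
      simp [ContinuousMap.sum_apply]
      linarith
    have h3 := h2 y
    simp only [map_sub, map_smul, map_sum] at h3
    simp [ContinuousMap.sum_apply] at h3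
    have h4 : (F.card : ℝ) * ε ≤ ∑ U ∈ F, T (f U) y := by
      rw [← nsmul_eq_mul]
      exact Finset.card_nsmul_le_sum _ _ _ fun U hU => (hF (Finset.mem_coe.2 hU)).2
    have h5 : T 1 y ≤ ‖T 1‖ := (le_abs_self _).trans ((T 1).norm_coe_le_norm y)
    have h6 : (k : ℝ) * T 1 y ≤ k * ‖T 1‖ := mul_le_mul_of_nonneg_left h5 (Nat.cast_nonneg k)
    apply Nat.le_floor
    rw [le_div_iff₀ hε0]
    linarith
  refine ⟨fun U hU => ⟨?_, ?_⟩, ⌊(k * ‖T 1‖) / ε⌋₊, fun y => ?_⟩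
  · exact (isClosed_le continuous_const (T (f U)).continuous).isCompact
  · obtain ⟨h0, hn, -⟩ := hf U hU
    have hT : 0 ≤ T (f U) := hpos _ fun x => (h0 x).1
    have : ∃ y, ε < T (f U) y := by
      by_contra! hcon
      have h1 : ‖T (f U)‖ ≤ ε := by
        refine (ContinuousMap.norm_le _ hε0.le).2 fun y => ?_
        rw [Real.norm_of_nonneg (show 0 ≤ T (f U) y from hT y)]
        exact hcon y
      have h2 := hemb (f U)
      rw [hn] at h2
      linarith
    obtain ⟨y, hy⟩ := this
    exact ⟨y, interior_maximal (fun z (hz : ε < T (f U) z) => hz.le)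
      (isOpen_lt continuous_const (T (f U)).continuous) hy⟩
  · have hfin : {U ∈ 𝒰 | ε ≤ T (f U) y}.Finite := by
      by_contra hinf
      obtain ⟨F, hF, hc⟩ := Set.Infinite.exists_subset_card_eq hinf (⌊(k * ‖T 1‖) / ε⌋₊ + 1)
      have := key y F hF
      omega
    refine ⟨hfin, ?_⟩
    rw [Set.ncard_eq_toFinset_card _ hfin]
    exact key y _ (by simp)
end

section
/- Let K₁ and K₂ be nonempty compact Hausdorff spaces and T : C(K₁) → C(K₂) a positive surjective linear isomorphism. Then ‖T‖ = ‖T(𝟏)‖ and T(𝟏) ≥ (1/‖T⁻¹‖)·𝟏, where 𝟏 denotes the constant-one function. Moreover, there exists a positive surjective linear isomorphism S : C(K₁) → C(K₂) with ‖S‖ = 1, S(𝟏) = 𝟏, and ‖S⁻¹‖ ≤ ‖T‖·‖T⁻¹‖. -/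
open Set

theorem aux_abs_le {K₁ K₂ : Type*} [TopologicalSpace K₁] [CompactSpace K₁]
    [TopologicalSpace K₂] [CompactSpace K₂]
    (T : C(K₁, ℝ) →L[ℝ] C(K₂, ℝ)) (hpos : ∀ f : C(K₁, ℝ), 0 ≤ f → 0 ≤ T f)
    (f : C(K₁, ℝ)) (x : K₂) : |T f x| ≤ ‖f‖ * T 1 x := by
  have h1 : 0 ≤ T (‖f‖ • 1 - f) := hpos _ (by
    intro y
    have := (abs_le.1 (f.norm_coe_le_norm y)).2
    simpa using this)
  have h2 : 0 ≤ T (‖f‖ • 1 + f) := hpos _ (by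
    intro y
    have := (abs_le.1 (f.norm_coe_le_norm y)).1
    simp
    linarith)
  have h1x := h1 x
  have h2x := h2 x
  rw [map_sub, map_smul] at h1x
  rw [map_add, map_smul] at h2x
  simp at h1x h2x
  exact abs_le.2 ⟨by linarith, by linarith⟩

theorem aux_norm {K₁ K₂ : Type*} [TopologicalSpace K₁] [CompactSpace K₁] [Nonempty K₁]
    [TopologicalSpace K₂] [CompactSpace K₂]
    (T : C(K₁, ℝ) →L[ℝ] C(K₂, ℝ)) (hpos : ∀ f : C(K₁, ℝ), 0 ≤ f → 0 ≤ T f) :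
    ‖T‖ = ‖T 1‖ := by
  apply le_antisymm
  · refine T.opNorm_le_bound (norm_nonneg _) fun f => ?_
    refine (ContinuousMap.norm_le _ (by positivity)).2 fun x => ?_
    have h := aux_abs_le T hpos f x
    have h' := (abs_le.1 ((T 1).norm_coe_le_norm x)).2
    calc ‖T f x‖ ≤ ‖f‖ * T 1 x := h
      _ ≤ ‖f‖ * ‖T 1‖ := by gcongr
      _ = _ := mul_comm _ _
  · simpa using T.le_opNorm 1

/-- If `T : C(K₁) → C(K₂)` is a positive surjective isomorphism between spaces of
continuous functions on nonempty compact Hausdorff spaces, then `‖T‖ = ‖T 𝟏‖`,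
`T 𝟏 ≥ (1/‖T⁻¹‖)·𝟏`, and there is a positive surjective isomorphism `S` with
`‖S‖ = 1`, `S 𝟏 = 𝟏` and `‖S⁻¹‖ ≤ ‖T‖·‖T⁻¹‖`. -/
theorem stmt_17 {K₁ K₂ : Type*} [TopologicalSpace K₁] [CompactSpace K₁] [T2Space K₁]
    [Nonempty K₁] [TopologicalSpace K₂] [CompactSpace K₂] [T2Space K₂] [Nonempty K₂]
    (T : C(K₁, ℝ) ≃L[ℝ] C(K₂, ℝ))
    (hpos : ∀ f : C(K₁, ℝ), 0 ≤ f → 0 ≤ T f) :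
    ‖(T : C(K₁, ℝ) →L[ℝ] C(K₂, ℝ))‖ = ‖T (1 : C(K₁, ℝ))‖ ∧
    (‖(T.symm : C(K₂, ℝ) →L[ℝ] C(K₁, ℝ))‖)⁻¹ • (1 : C(K₂, ℝ)) ≤ T (1 : C(K₁, ℝ)) ∧
    ∃ S : C(K₁, ℝ) ≃L[ℝ] C(K₂, ℝ),
      (∀ f : C(K₁, ℝ), 0 ≤ f → 0 ≤ S f) ∧
      ‖(S : C(K₁, ℝ) →L[ℝ] C(K₂, ℝ))‖ = 1 ∧
      S (1 : C(K₁, ℝ)) = 1 ∧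
      ‖(S.symm : C(K₂, ℝ) →L[ℝ] C(K₁, ℝ))‖ ≤
        ‖(T : C(K₁, ℝ) →L[ℝ] C(K₂, ℝ))‖ * ‖(T.symm : C(K₂, ℝ) →L[ℝ] C(K₁, ℝ))‖ := by
  have hnorm := aux_norm (T : C(K₁, ℝ) →L[ℝ] C(K₂, ℝ)) hpos
  have hlow : ∀ x, (‖(T.symm : C(K₂, ℝ) →L[ℝ] C(K₁, ℝ))‖)⁻¹ ≤ T 1 x ∧ 0 < T 1 x := by
    intro x
    have h := aux_abs_le (T : C(K₁, ℝ) →L[ℝ] C(K₂, ℝ)) hpos (T.symm 1) x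
    have h2 : ‖T.symm (1 : C(K₂, ℝ))‖ ≤ ‖(T.symm : C(K₂, ℝ) →L[ℝ] C(K₁, ℝ))‖ := by
      simpa using (T.symm : C(K₂, ℝ) →L[ℝ] C(K₁, ℝ)).le_opNorm 1
    have h0 : 0 ≤ T 1 x := hpos 1 (fun y => by simp) x
    simp at h
    have h3 : 1 ≤ ‖(T.symm : C(K₂, ℝ) →L[ℝ] C(K₁, ℝ))‖ * T 1 x :=
      h.trans (by gcongr)
    have hc : 0 < ‖(T.symm : C(K₂, ℝ) →L[ℝ] C(K₁, ℝ))‖ := by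
      rcases (norm_nonneg (T.symm : C(K₂, ℝ) →L[ℝ] C(K₁, ℝ))).eq_or_lt with h4 | h4
      · rw [← h4] at h3
        norm_num at h3
      · exact h4
    have h5 := (inv_le_iff_one_le_mul₀' hc).2 h3
    exact ⟨h5, (inv_pos.2 hc).trans_le h5⟩
  refine ⟨hnorm, fun x => by simpa using (hlow x).1, ?_⟩
  let k : C(K₂, ℝ) := ⟨fun x => (T 1 x)⁻¹, (T 1).continuous.inv₀ fun x => (hlow x).2.ne'⟩
  have hk : k * T 1 = 1 := by
    ext x
    exact inv_mul_cancel₀ (hlow x).2.ne'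
  let S : C(K₁, ℝ) ≃L[ℝ] C(K₂, ℝ) := ContinuousLinearEquiv.equivOfInverse
    ((ContinuousLinearMap.mul ℝ C(K₂, ℝ) k).comp (T : C(K₁, ℝ) →L[ℝ] C(K₂, ℝ)))
    ((T.symm : C(K₂, ℝ) →L[ℝ] C(K₁, ℝ)).comp (ContinuousLinearMap.mul ℝ C(K₂, ℝ) (T 1)))
    (fun f => by
      change T.symm (T 1 * (k * T f)) = f
      rw [← mul_assoc, mul_comm (T 1), hk, one_mul, T.symm_apply_apply])
    (fun g => by
      change k * T (T.symm (T 1 * g)) = g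
      rw [T.apply_symm_apply, ← mul_assoc, hk, one_mul])
  have hS1 : S 1 = 1 := hk
  have hSpos : ∀ f : C(K₁, ℝ), 0 ≤ f → 0 ≤ S f := fun f hf x =>
    mul_nonneg (inv_nonneg.2 (hlow x).2.le) (hpos f hf x)
  refine ⟨S, hSpos, ?_, hS1, ?_⟩
  · rw [aux_norm (S : C(K₁, ℝ) →L[ℝ] C(K₂, ℝ)) hSpos]
    change ‖S 1‖ = 1
    rw [hS1, norm_one]
  · refine ContinuousLinearMap.opNorm_le_bound _ (by positivity) fun g => ?_
    change ‖(T.symm : C(K₂, ℝ) →L[ℝ] C(K₁, ℝ)) (T 1 * g)‖ ≤ _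
    rw [hnorm]
    calc _ ≤ ‖(T.symm : C(K₂, ℝ) →L[ℝ] C(K₁, ℝ))‖ * ‖T 1 * g‖ :=
          ContinuousLinearMap.le_opNorm _ _
      _ ≤ ‖(T.symm : C(K₂, ℝ) →L[ℝ] C(K₁, ℝ))‖ * (‖T 1‖ * ‖g‖) := by
          gcongr
          exact norm_mul_le _ _
      _ = ‖T 1‖ * ‖(T.symm : C(K₂, ℝ) →L[ℝ] C(K₁, ℝ))‖ * ‖g‖ := by ring
end

section
/- Let K and L be compact Hausdorff spaces, let T : C(K) → C(L) be a positive surjective linear isomorphism with T(𝟏) = ‖T‖·𝟏, and let α > 0. If there exists a nonnegative function f ∈ C(K) with ‖f‖ = 1 and ‖Tf‖ ≤ α·‖T‖, then ‖T‖·‖T⁻¹‖ ≥ 2/α − 1. -/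
open Set

/-- If `T : C(K) → C(L)` is a positive surjective isomorphism with `T 𝟏 = ‖T‖·𝟏`,
`a > 0`, and there is a nonnegative norm-one `f ∈ C(K)` with `‖T f‖ ≤ a·‖T‖`, then
`‖T‖·‖T⁻¹‖ ≥ 2/a - 1`. -/
theorem stmt_18 {K L : Type*} [TopologicalSpace K] [CompactSpace K] [T2Space K]
    [TopologicalSpace L] [CompactSpace L] [T2Space L]
    (T : C(K, ℝ) ≃L[ℝ] C(L, ℝ))
    (hpos : ∀ f : C(K, ℝ), 0 ≤ f → 0 ≤ T f)
    (hT1 : T (1 : C(K, ℝ)) = ‖(T : C(K, ℝ) →L[ℝ] C(L, ℝ))‖ • (1 : C(L, ℝ)))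
    (a : ℝ) (ha : 0 < a)
    (f : C(K, ℝ)) (hf0 : 0 ≤ f) (hfn : ‖f‖ = 1)
    (hTf : ‖T f‖ ≤ a * ‖(T : C(K, ℝ) →L[ℝ] C(L, ℝ))‖) :
    2 / a - 1 ≤
      ‖(T : C(K, ℝ) →L[ℝ] C(L, ℝ))‖ * ‖(T.symm : C(L, ℝ) →L[ℝ] C(K, ℝ))‖ := by
  set t := ‖(T : C(K, ℝ) →L[ℝ] C(L, ℝ))‖ with ht
  have ht0 : 0 ≤ t := ContinuousLinearMap.opNorm_nonneg _
  have h1 : ‖(1 : C(K, ℝ))‖ ≤ 1 := by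
    rw [ContinuousMap.norm_le _ zero_le_one]
    intro x
    simp
  have hTg : ‖T ((2 / a) • f - 1)‖ ≤ t := by
    rw [ContinuousMap.norm_le _ ht0]
    intro y
    have hy0 : 0 ≤ (T f) y := hpos f hf0 y
    have hy1 : (T f) y ≤ a * t :=
      ((le_abs_self _).trans ((T f).norm_coe_le_norm y)).trans hTf
    have e : (T ((2 / a) • f - 1)) y = 2 / a * (T f) y - t := by
      rw [map_sub, map_smul, hT1]
      simp
    have h2 : 2 / a * (T f) y ≤ 2 / a * (a * t) :=
      mul_le_mul_of_nonneg_left hy1 (by positivity)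
    have h3 : 2 / a * (a * t) = 2 * t := by field_simp
    have h4 : 0 ≤ 2 / a * (T f) y := by positivity
    rw [e, Real.norm_eq_abs, abs_le]
    constructor <;> linarith
  have hg : ‖(2 / a) • f - 1‖ ≤ ‖(T.symm : C(L, ℝ) →L[ℝ] C(K, ℝ))‖ * t := by
    have h := (T.symm : C(L, ℝ) →L[ℝ] C(K, ℝ)).le_opNorm (T ((2 / a) • f - 1))
    rw [ContinuousLinearEquiv.coe_coe, T.symm_apply_apply] at h
    exact h.trans (mul_le_mul_of_nonneg_left hTg (ContinuousLinearMap.opNorm_nonneg _))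
  have h5 : ‖(2 / a) • f‖ = 2 / a := by
    rw [norm_smul, hfn, mul_one, Real.norm_eq_abs, abs_of_pos (by positivity)]
  have h6 := norm_sub_norm_le ((2 / a) • f) 1
  rw [mul_comm]
  linarith
end

section
/- Let K₁ and K₂ be scattered compact Hausdorff spaces, and suppose that for some ordinal α and some n ∈ ℕ with n ≥ 2, one has ht(K₁) > ω^α·n and K₂^(ω^α) = {y} for some point y ∈ K₂. Then every surjective linear isomorphism T : C(K₁) → C(K₂) satisfies ‖T‖·‖T⁻¹‖ ≥ n + √((n−1)(n+3)); that is, d_BM(C(K₁), C(K₂)) ≥ n + √((n−1)(n+3)). -/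
open Ordinal Set

open Filter Topology Order

/-- Iterated derivative of a subset. -/
noncomputable def dset {X : Type*} [TopologicalSpace X] (F : Set X) : Ordinal.{0} → Set X :=
  fun o => Ordinal.limitRecOn o F
    (fun _ ih => derivedSet ih)
    (fun o _ ih => ⋂ (β : Ordinal) (h : β < o), ih β h)

section DS
variable {X : Type*} [TopologicalSpace X]

lemma cbDeriv_eq (o : Ordinal.{0}) : cbDeriv X o = dset (Set.univ : Set X) o := rfl

lemma dset_zero (F : Set X) : dset F 0 = F := by
  unfold dset; rw [Ordinal.limitRecOn_zero]

lemma dset_succ (F : Set X) (o : Ordinal.{0}) : dset F (o + 1) = derivedSet (dset F o) := by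
  unfold dset; rw [Ordinal.limitRecOn_add_one]

lemma dset_limit (F : Set X) (o : Ordinal.{0}) (h : IsSuccLimit o) :
    dset F o = ⋂ (β : Ordinal) (_ : β < o), dset F β := by
  unfold dset; rw [Ordinal.limitRecOn_limit _ _ _ _ h]

lemma dset_one (F : Set X) : dset F 1 = derivedSet F := by
  rw [← zero_add (1 : Ordinal), dset_succ, dset_zero]

lemma dset_mono {F G : Set X} (h : F ⊆ G) (o : Ordinal.{0}) : dset F o ⊆ dset G o := by
  induction o using Ordinal.limitRecOn with
  | zero => simpa [dset_zero] using h
  | add_one o ih => rw [dset_succ, dset_succ]; exact derivedSet_mono _ _ ih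
  | limit o ho ih =>
    rw [dset_limit _ _ ho, dset_limit _ _ ho]
    exact iInter₂_mono ih

lemma dset_closed [T1Space X] {F : Set X} (h : IsClosed F) (o : Ordinal.{0}) :
    IsClosed (dset F o) := by
  induction o using Ordinal.limitRecOn with
  | zero => simpa [dset_zero] using h
  | add_one o ih => rw [dset_succ]; exact isClosed_derivedSet _
  | limit o ho ih =>
    rw [dset_limit _ _ ho]
    exact isClosed_biInter ih

lemma dset_anti [T1Space X] {F : Set X} (h : IsClosed F) {a b : Ordinal.{0}} (hab : a ≤ b) :
    dset F b ⊆ dset F a := by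
  induction b using Ordinal.limitRecOn with
  | zero => simp at hab; rw [hab]
  | add_one o ih =>
    rcases hab.lt_or_eq with h1 | h1
    · have h2 : a ≤ o := by simpa using h1
      rw [dset_succ]
      exact ((isClosed_iff_derivedSet_subset _).1 (dset_closed h o)).trans (ih h2)
    · rw [h1]
  | limit o ho ih =>
    rcases hab.lt_or_eq with h1 | h1
    · rw [dset_limit _ _ ho]
      exact iInter₂_subset a h1
    · rw [h1]

lemma dset_subset [T1Space X] {F : Set X} (h : IsClosed F) (a : Ordinal.{0}) :
    dset F a ⊆ F := by
  have := dset_anti h (zero_le (a := a))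
  rwa [dset_zero] at this

lemma dset_add [T1Space X] {F : Set X} (h : IsClosed F) (a b : Ordinal.{0}) :
    dset F (a + b) = dset (dset F a) b := by
  induction b using Ordinal.limitRecOn with
  | zero => simp [dset_zero]
  | add_one o ih => rw [← add_assoc, dset_succ, dset_succ, ih]
  | limit o ho ih =>
    rw [dset_limit _ o ho, dset_limit _ (a + o) (Ordinal.isSuccLimit_add a ho)]
    apply subset_antisymm
    · refine subset_iInter₂ fun b hb => ?_
      rw [← ih b hb]
      exact iInter₂_subset (a + b) (by simpa using hb)
    · refine subset_iInter₂ fun c hc => ?_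
      obtain ⟨d, hd, hcd⟩ := (Ordinal.lt_add_iff ho.ne_bot).1 hc
      refine (iInter₂_subset d hd).trans ?_
      rw [← ih d hd]
      exact dset_anti h hcd

lemma dset_union [T1Space X] {F G : Set X} (hF : IsClosed F) (hG : IsClosed G) (o : Ordinal.{0}) :
    dset (F ∪ G) o = dset F o ∪ dset G o := by
  induction o using Ordinal.limitRecOn with
  | zero => simp [dset_zero]
  | add_one o ih => rw [dset_succ, dset_succ, dset_succ, ih, derivedSet_union]
  | limit o ho ih =>
    rw [dset_limit _ _ ho, dset_limit _ _ ho, dset_limit _ _ ho]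
    apply subset_antisymm
    · intro x hx
      by_contra hcon
      simp only [mem_union, mem_iInter, not_or, not_forall] at hcon hx
      obtain ⟨⟨b, hb, hxb⟩, ⟨c, hc, hxc⟩⟩ := hcon
      have hm : max b c < o := max_lt hb hc
      have := hx _ hm
      rw [ih _ hm] at this
      rcases this with h | h
      · exact hxb (dset_anti hF (le_max_left _ _) h)
      · exact hxc (dset_anti hG (le_max_right _ _) h)
    · refine subset_iInter₂ fun c hc => ?_
      rw [ih c hc]
      exact union_subset_union (iInter₂_subset c hc) (iInter₂_subset c hc)

lemma dset_limit_empty [CompactSpace X] [T2Space X] {F : Set X} (hF : IsClosed F) {o : Ordinal.{0}}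
    (ho : IsSuccLimit o) (h : dset F o = ∅) : ∃ b < o, dset F b = ∅ := by
  by_contra hcon
  push Not at hcon
  have : Nonempty (Iio o) := ⟨⟨0, by
    have := ho.bot_lt; simpa using this⟩⟩
  have := IsCompact.nonempty_iInter_of_directed_nonempty_isCompact_isClosed
    (fun b : Iio o => dset F b.1)
    (by
      intro b c
      refine ⟨max b c, dset_anti hF ?_, dset_anti hF ?_⟩
      · exact_mod_cast le_max_left b c
      · exact_mod_cast le_max_right b c)
    (fun b => hcon b.1 b.2) (fun b => (dset_closed hF _).isCompact) (fun b => dset_closed hF _)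
  rw [dset_limit _ _ ho] at h
  obtain ⟨x, hx⟩ := this
  have : x ∈ ⋂ (β : Ordinal) (_ : β < o), dset F β := by
    simp only [mem_iInter] at hx ⊢
    intro b hb
    exact hx ⟨b, hb⟩
  rw [h] at this
  exact this

lemma dset_finite_empty [T1Space X] {F : Set X} (hF : F.Finite) {o : Ordinal.{0}} (ho : 1 ≤ o) :
    dset F o = ∅ := by
  apply subset_empty_iff.1
  refine (dset_anti hF.isClosed ho).trans ?_
  rw [dset_one]
  intro x hx
  rw [mem_derivedSet, accPt_iff_frequently_nhdsNE] at hx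
  apply hx
  have : (F \ {x})ᶜ ∈ 𝓝 x := (hF.subset sdiff_subset).isClosed.isOpen_compl.mem_nhds (by simp)
  filter_upwards [nhdsWithin_le_nhds this, self_mem_nhdsWithin] with z hz hz2 hz3
  exact hz ⟨hz3, hz2⟩

lemma finite_of_dset_one [CompactSpace X] {F : Set X} (hF : dset F 1 = ∅) : F.Finite := by
  by_contra hcon
  obtain ⟨x, hx⟩ := Set.Infinite.exists_accPt_principal hcon
  rw [dset_one] at hF
  have : x ∈ derivedSet F := hx
  rw [hF] at this
  exact this

lemma infinite_of_mem_derivedSet [T1Space X] {F U : Set X} {x : X} (hx : x ∈ derivedSet F)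
    (hU : IsOpen U) (hxU : x ∈ U) : (U ∩ F).Infinite := by
  intro hfin
  rw [mem_derivedSet, accPt_iff_frequently_nhdsNE] at hx
  apply hx
  have : ((U ∩ F) \ {x})ᶜ ∈ 𝓝 x := (hfin.subset sdiff_subset).isClosed.isOpen_compl.mem_nhds (by simp)
  filter_upwards [nhdsWithin_le_nhds this, self_mem_nhdsWithin,
    nhdsWithin_le_nhds (hU.mem_nhds hxU)] with z hz hz2 hz4 hz3
  exact hz ⟨⟨hz4, hz3⟩, hz2⟩

end DS

section GD
set_option linter.unusedSectionVars false
variable {K₁ K₂ : Type*} [TopologicalSpace K₁] [CompactSpace K₁] [T2Space K₁]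
    [TopologicalSpace K₂] [CompactSpace K₂] [T2Space K₂]

/-- `g` takes values in `[0,1]`, is `1` on `V` and `0` off `U`. -/
def Bump (g : C(K₁, ℝ)) (U V : Set K₁) : Prop :=
  (∀ p, 0 ≤ g p ∧ g p ≤ 1) ∧ (∀ p ∈ V, g p = 1) ∧ (∀ p, p ∉ U → g p = 0)

lemma exists_bump {U : Set K₁} (hU : IsOpen U) {x : K₁} (hx : x ∈ U) :
    ∃ (g : C(K₁, ℝ)) (V : Set K₁), IsOpen V ∧ x ∈ V ∧ V ⊆ U ∧ Bump g U V := by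
  obtain ⟨W, hW, hWc, hWU⟩ := exists_mem_nhds_isClosed_subset (hU.mem_nhds hx)
  obtain ⟨f, hf0, hf1, hf⟩ := exists_continuous_zero_one_of_isClosed hU.isClosed_compl hWc
    (by rw [Set.disjoint_left]; intro a ha hb; exact ha (hWU hb))
  refine ⟨f, interior W, isOpen_interior, mem_interior_iff_mem_nhds.2 hW,
    interior_subset.trans hWU, fun p => ⟨(hf p).1, (hf p).2⟩, fun p hp => ?_, fun p hp => ?_⟩
  · simpa using hf1 (interior_subset hp)
  · simpa using hf0 hp

/-- Small-image bumps can be found when going down `φ` levels. -/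
def Good (T : C(K₁, ℝ) →L[ℝ] C(K₂, ℝ)) (φ : Ordinal.{0}) (G : Set K₂) (ε : ℝ) : Prop :=
  ∀ (γ : Ordinal.{0}) (x : K₁) (U : Set K₁), IsOpen U → x ∈ U → x ∈ dset (Set.univ : Set K₁) (γ + φ) →
    ∃ (g : C(K₁, ℝ)) (V : Set K₁) (x' : K₁), IsOpen V ∧ x' ∈ V ∧ V ⊆ U ∧
      x' ∈ dset (Set.univ : Set K₁) γ ∧ Bump g U V ∧ ∀ z ∈ G, |T g z| < ε

lemma Good.mono {T : C(K₁, ℝ) →L[ℝ] C(K₂, ℝ)} {φ ψ : Ordinal.{0}} {G : Set K₂} {ε : ℝ}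
    (h : Good T φ G ε) (hφ : φ ≤ ψ) : Good T ψ G ε := by
  intro γ x U hU hx hxd
  exact h γ x U hU hx (dset_anti isClosed_univ (by gcongr) hxd)

lemma abs_apply_le (T : C(K₁, ℝ) →L[ℝ] C(K₂, ℝ)) {M : ℝ} (hT : ∀ f, ‖T f‖ ≤ M * ‖f‖) (hM : 0 ≤ M)
    (f : C(K₁, ℝ)) (hf : ∀ p, |f p| ≤ 1) (z : K₂) : |T f z| ≤ M := by
  have h1 : ‖f‖ ≤ 1 := (ContinuousMap.norm_le _ zero_le_one).2 hf
  have h2 : |T f z| ≤ ‖T f‖ := ContinuousMap.norm_coe_le_norm (T f) z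
  have h3 := hT f
  nlinarith

lemma good_finite (T : C(K₁, ℝ) →L[ℝ] C(K₂, ℝ)) {G : Set K₂} (hG : G.Finite) {ε : ℝ} (hε : 0 < ε) :
    Good T 1 G ε := by
  classical
  intro γ x U hU hx hxd
  rw [dset_succ] at hxd
  have hinf := infinite_of_mem_derivedSet hxd hU hx
  obtain ⟨N, hN⟩ := exists_nat_gt (hG.toFinset.card * ‖T‖ / ε)
  obtain ⟨s, hsU, hsN⟩ := hinf.exists_subset_card_eq N
  obtain ⟨W, hW, hWd⟩ := (s.finite_toSet).t2_separation
  have hb : ∀ p : K₁, p ∈ s → ∃ (g : C(K₁, ℝ)) (V : Set K₁), IsOpen V ∧ p ∈ V ∧ V ⊆ W p ∩ U ∧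
      Bump g (W p ∩ U) V := fun p hp =>
    exists_bump ((hW p).2.inter hU) ⟨(hW p).1, (hsU hp).1⟩
  choose! g V hVo hpV hVU hg using hb
  by_contra hcon
  push Not at hcon
  have hbad : ∀ p ∈ s, ∃ z ∈ G, ε ≤ |T (g p) z| := by
    intro p hp
    apply hcon (g p) (V p) p (hVo p hp) (hpV p hp) ((hVU p hp).trans inter_subset_right)
      (hsU hp).2
    refine ⟨(hg p hp).1, (hg p hp).2.1, fun q hq => (hg p hp).2.2 q fun h => hq h.2⟩
  have hsum : ∀ q, ∑ p ∈ s, g p q ≤ 1 := by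
    intro q
    by_cases h : ∃ p ∈ s, q ∈ W p
    · obtain ⟨p, hp, hq⟩ := h
      rw [Finset.sum_eq_single_of_mem p hp]
      · exact ((hg p hp).1 q).2
      · intro p' hp' hne
        apply (hg p' hp').2.2
        intro h
        have := hWd hp hp' (Ne.symm hne)
        exact (Set.disjoint_left.1 this hq) h.1
    · push Not at h
      rw [Finset.sum_eq_zero]
      · exact zero_le_one
      · intro p hp
        exact (hg p hp).2.2 _ fun h' => h p hp h'.1
  have hz : ∀ z, ∑ p ∈ s, |T (g p) z| ≤ ‖T‖ := by
    intro z
    have e : ∑ p ∈ s, |T (g p) z| = T (∑ p ∈ s, (SignType.sign (T (g p) z) : ℝ) • g p) z := by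
      rw [map_sum, ContinuousMap.sum_apply]
      refine Finset.sum_congr rfl fun p _ => ?_
      rw [map_smul, ContinuousMap.smul_apply, _root_.smul_eq_mul, sign_mul_self]
    rw [e]
    refine (le_abs_self _).trans (abs_apply_le T (M := ‖T‖) T.le_opNorm T.opNorm_nonneg _ ?_ z)
    intro q
    rw [ContinuousMap.sum_apply]
    refine (Finset.abs_sum_le_sum_abs _ _).trans (le_trans (Finset.sum_le_sum ?_) (hsum q))
    intro p hp
    rw [ContinuousMap.smul_apply, _root_.smul_eq_mul, abs_mul, abs_of_nonneg ((hg p hp).1 q).1]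
    have h0 := ((hg p hp).1 q).1
    have : |(SignType.sign (T (g p) z) : ℝ)| ≤ 1 := by
      rcases lt_trichotomy (T (g p) z) 0 with h | h | h <;> simp [h]
    nlinarith
  have h1 : N * ε ≤ ∑ p ∈ s, ∑ z ∈ hG.toFinset, |T (g p) z| := by
    rw [← hsN, ← _root_.nsmul_eq_mul]
    refine Finset.card_nsmul_le_sum _ _ _ fun p hp => ?_
    obtain ⟨z, hz, hεz⟩ := hbad p hp
    exact hεz.trans (Finset.single_le_sum (f := fun z => |T (g p) z|)
      (fun _ _ => abs_nonneg _) (hG.mem_toFinset.2 hz))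
  rw [Finset.sum_comm] at h1
  have h2 : ∑ z ∈ hG.toFinset, ∑ p ∈ s, |T (g p) z| ≤ hG.toFinset.card * ‖T‖ := by
    rw [← _root_.nsmul_eq_mul]
    exact Finset.sum_le_card_nsmul _ _ _ fun z _ => hz z
  rw [div_lt_iff₀ hε] at hN
  linarith

lemma iterate_good (T : C(K₁, ℝ) →L[ℝ] C(K₂, ℝ)) {F E : Set K₂} (hF : IsClosed F)
    {φ : Ordinal.{0}} {ε : ℝ}
    (H : ∀ G ⊆ F, IsClosed G → Disjoint G E → Good T φ (G ∪ E) ε) (γ : Ordinal.{0}) (N : ℕ) :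
    ∀ (F₀ : Set K₂), F₀ ⊆ F → IsClosed F₀ → Disjoint F₀ E →
    ∀ (x : K₁) (U : Set K₁), IsOpen U → x ∈ U → x ∈ dset (Set.univ : Set K₁) (γ + φ * N) →
    ∃ (g : ℕ → C(K₁, ℝ)) (V : Set K₁) (x' : K₁), IsOpen V ∧ x' ∈ V ∧ V ⊆ U ∧
      x' ∈ dset (Set.univ : Set K₁) γ ∧ (∀ i < N, Bump (g i) U V) ∧
      (∀ i j, i < j → j < N → ∀ p, g j p ≠ 0 → g i p = 1) ∧
      (∀ i < N, ∀ z ∈ F₀ ∪ E, |T (g i) z| < ε) ∧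
      (∀ z ∈ F, ∀ i j, i < j → j < N → ε ≤ |T (g i) z| → |T (g j) z| < ε) := by
  induction N with
  | zero =>
    intro F₀ _ _ _ x U hU hx hxd
    refine ⟨fun _ => 0, U, x, hU, hx, subset_rfl, by simpa using hxd, ?_, ?_, ?_, ?_⟩ <;> intros <;> omega
  | succ N ih =>
    intro F₀ hF₀ hF₀c hd x U hU hx hxd
    have e : γ + φ * ((N + 1 : ℕ) : Ordinal.{0}) = (γ + φ * N) + φ := by
      rw [Nat.cast_succ, mul_add_one, add_assoc]
    rw [e] at hxd
    obtain ⟨g₀, V₀, x₀, hV₀, hxV₀, hVU, hx₀, hb, hs⟩ := H F₀ hF₀ hF₀c hd _ x U hU hx hxd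
    obtain ⟨g, V, x', hV, hxV, hVV, hx', hgb, hg1, hg2, hg3⟩ :=
      ih (F₀ ∪ (F ∩ {z | ε ≤ |T g₀ z|})) (union_subset hF₀ inter_subset_left)
        (hF₀c.union (hF.inter (isClosed_le continuous_const (by fun_prop))))
        (by
          rw [Set.disjoint_union_left]
          refine ⟨hd, Set.disjoint_left.2 fun z hz hzE => ?_⟩
          exact absurd (hs z (Or.inr hzE)) (not_lt.2 hz.2)) x₀ V₀ hV₀ hxV₀ hx₀
    refine ⟨fun i => Nat.casesOn i g₀ g, V, x', hV, hxV, hVV.trans hVU, hx', ?_, ?_, ?_, ?_⟩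
    · rintro (_ | i) hi
      · exact ⟨hb.1, fun p hp => hb.2.1 p (hVV hp), hb.2.2⟩
      · have := hgb i (by omega)
        exact ⟨this.1, this.2.1, fun p hp => this.2.2 p fun h => hp (hVU h)⟩
    · rintro (_ | i) (_ | j) hij hj p hp
      · omega
      · refine hb.2.1 p ?_
        by_contra h
        exact hp ((hgb j (by omega)).2.2 p h)
      · omega
      · exact hg1 i j (by omega) (by omega) p hp
    · rintro (_ | i) hi z hz
      · exact hs z hz
      · refine hg2 i (by omega) z ?_
        rcases hz with h | h
        · exact Or.inl (Or.inl h)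
        · exact Or.inr h
    · rintro z hz (_ | i) (_ | j) hij hj hε
      · omega
      · exact hg2 j (by omega) z (Or.inl (Or.inr ⟨hz, hε⟩))
      · omega
      · exact hg3 z hz i j (by omega) (by omega) hε

/-- A sum in which at most one term is big. -/
lemma sum_one_big {N : ℕ} {a : ℕ → ℝ} {B ε : ℝ} (hε : 0 ≤ ε) (hB : 0 ≤ B)
    (h : ∀ i < N, a i ≤ B) (h2 : ∀ i j, i < j → j < N → ε ≤ a i → a j < ε) :
    ∑ i ∈ Finset.range N, a i ≤ B + N * ε := by
  by_cases hb : ∃ i < N, ε ≤ a i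
  · obtain ⟨i, hi, hia⟩ := hb
    rw [← Finset.add_sum_erase _ _ (Finset.mem_range.2 hi)]
    have : ∑ j ∈ (Finset.range N).erase i, a j ≤ ((Finset.range N).erase i).card • ε := by
      refine Finset.sum_le_card_nsmul _ _ _ fun j hj => ?_
      simp only [Finset.mem_erase, Finset.mem_range] at hj
      rcases lt_or_gt_of_ne hj.1 with h' | h'
      · by_contra hc
        push Not at hc
        have := h2 j i h' hi hc.le
        linarith
      · exact (h2 i j h' hj.2 hia).le
    rw [_root_.nsmul_eq_mul] at this
    have hc : (((Finset.range N).erase i).card : ℝ) ≤ N := by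
      exact_mod_cast (Finset.card_erase_le).trans (by simp)
    have := h i hi
    nlinarith
  · push Not at hb
    have : ∑ j ∈ Finset.range N, a j ≤ (Finset.range N).card • ε :=
      Finset.sum_le_card_nsmul _ _ _ fun j hj => (hb j (Finset.mem_range.1 hj)).le
    rw [_root_.nsmul_eq_mul, Finset.card_range] at this
    linarith

/-- Averaging step. -/
lemma good_average (T : C(K₁, ℝ) →L[ℝ] C(K₂, ℝ)) {F E : Set K₂} (hF : IsClosed F)
    {φ : Ordinal.{0}} {ε : ℝ} (hε : 0 < ε) {N : ℕ} (hN : 0 < N) (hNT : ‖T‖ < N * (ε / 2))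
    (H : ∀ G ⊆ F, IsClosed G → Disjoint G E → Good T φ (G ∪ E) (ε / 2)) :
    Good T (φ * N) F ε := by
  intro γ x U hU hx hxd
  obtain ⟨g, V, x', hV, hxV, hVU, hx', hgb, hg1, hg2, hg3⟩ :=
    iterate_good T hF H γ N ∅ (empty_subset _) isClosed_empty (Set.empty_disjoint _) x U hU hx hxd
  have hN' : (0 : ℝ) < N := by exact_mod_cast hN
  refine ⟨(N : ℝ)⁻¹ • ∑ i ∈ Finset.range N, g i, V, x', hV, hxV, hVU, hx', ⟨fun p => ?_, fun p hp => ?_,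
    fun p hp => ?_⟩, fun z hz => ?_⟩
  · simp only [ContinuousMap.smul_apply, ContinuousMap.sum_apply, _root_.smul_eq_mul]
    have h0 : 0 ≤ ∑ i ∈ Finset.range N, g i p :=
      Finset.sum_nonneg fun i hi => ((hgb i (Finset.mem_range.1 hi)).1 p).1
    have h1 : ∑ i ∈ Finset.range N, g i p ≤ (Finset.range N).card • (1 : ℝ) :=
      Finset.sum_le_card_nsmul _ _ _ fun i hi => ((hgb i (Finset.mem_range.1 hi)).1 p).2
    simp only [Finset.card_range, _root_.nsmul_eq_mul, mul_one] at h1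
    refine ⟨by positivity, ?_⟩
    rw [inv_mul_le_iff₀ hN']
    linarith
  · simp only [ContinuousMap.smul_apply, ContinuousMap.sum_apply, _root_.smul_eq_mul]
    rw [Finset.sum_congr rfl fun i hi => (hgb i (Finset.mem_range.1 hi)).2.1 p hp]
    simp [hN'.ne']
  · simp only [ContinuousMap.smul_apply, ContinuousMap.sum_apply, _root_.smul_eq_mul]
    rw [Finset.sum_eq_zero fun i hi => (hgb i (Finset.mem_range.1 hi)).2.2 p hp, mul_zero]
  · rw [map_smul, map_sum]
    simp only [ContinuousMap.smul_apply, ContinuousMap.sum_apply, _root_.smul_eq_mul]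
    rw [abs_mul, abs_of_pos (inv_pos.2 hN'), inv_mul_lt_iff₀ hN']
    refine (Finset.abs_sum_le_sum_abs _ _).trans_lt ?_
    have := sum_one_big (N := N) (a := fun i => |T (g i) z|) (B := ‖T‖) (ε := ε / 2) (by positivity)
      T.opNorm_nonneg (fun i hi => abs_apply_le T T.le_opNorm T.opNorm_nonneg _ (fun p => by
        rw [abs_of_nonneg ((hgb i hi).1 p).1]; exact ((hgb i hi).1 p).2) z) (hg3 z hz)
    linarith

lemma good_mul (T : C(K₁, ℝ) →L[ℝ] C(K₂, ℝ)) {β : Ordinal.{0}}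
    (H : ∀ ε : ℝ, 0 < ε → ∀ F : Set K₂, IsClosed F → dset F β = ∅ → Good T β F ε) (k : ℕ) :
    ∀ ε : ℝ, 0 < ε → ∃ N : ℕ, ∀ F : Set K₂, IsClosed F → dset F (β * (k + 1 : ℕ)) = ∅ →
      Good T (β * N) F ε := by
  induction k with
  | zero =>
    intro ε hε
    refine ⟨1, fun F hF h => ?_⟩
    simp only [zero_add, Nat.cast_one, mul_one] at h ⊢
    exact H ε hε F hF h
  | succ k ih =>
    intro ε hε
    obtain ⟨N₁, hN₁⟩ := ih (ε / 2) (by positivity)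
    obtain ⟨N, hN⟩ := exists_nat_gt (‖T‖ / (ε / 2))
    have hNpos : (0 : ℝ) < N := lt_of_le_of_lt (by positivity) hN
    refine ⟨N₁ * N, fun F hF h => ?_⟩
    rw [natCast_mul, ← mul_assoc]
    rw [Nat.cast_succ, mul_add_one, dset_add hF] at h
    refine good_average T (E := dset F (β * (k + 1 : ℕ))) hF hε (by exact_mod_cast hNpos)
      (by rwa [div_lt_iff₀ (by positivity)] at hN) ?_
    intro G hGF hG hd
    have hEc := dset_closed hF (β * (k + 1 : ℕ))
    apply hN₁ _ (hG.union hEc)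
    rw [dset_union hG hEc, union_empty_iff]
    constructor
    · apply subset_empty_iff.1
      intro z hz
      exact Set.disjoint_left.1 hd (dset_subset hG _ hz) (dset_mono hGF _ hz)
    · apply subset_empty_iff.1
      rw [← h]
      apply dset_anti hEc
      rw [Nat.cast_succ, mul_add_one]
      exact le_add_self

lemma good_opow (T : C(K₁, ℝ) →L[ℝ] C(K₂, ℝ)) (α : Ordinal.{0}) :
    ∀ ε : ℝ, 0 < ε → ∀ F : Set K₂, IsClosed F → dset F (ω ^ α) = ∅ → Good T (ω ^ α) F ε := by
  induction α using Ordinal.limitRecOn with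
  | zero =>
    intro ε hε F hF h
    rw [opow_zero] at h ⊢
    exact good_finite T (finite_of_dset_one h) hε
  | add_one α ih =>
    intro ε hε F hF h
    have hpos : (0 : Ordinal.{0}) < ω ^ α := opow_pos _ omega0_pos
    obtain ⟨b, hb, hFb⟩ := dset_limit_empty hF
      (isSuccLimit_opow_left isSuccLimit_omega0 (by simp)) h
    rw [opow_add_one] at hb ⊢
    obtain ⟨c, hc, hbc⟩ := (lt_mul_iff_of_isSuccLimit isSuccLimit_omega0).1 hb
    obtain ⟨k, rfl⟩ := lt_omega0.1 hc
    obtain ⟨N, hN⟩ := good_mul T ih k ε hε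
    refine (hN F hF ?_).mono ?_
    · apply subset_empty_iff.1
      rw [← hFb]
      apply dset_anti hF
      refine hbc.le.trans ?_
      gcongr
      simp
    · gcongr
      exact (natCast_lt_omega0 N).le
  | limit α hα ih =>
    intro ε hε F hF h
    obtain ⟨b, hb, hFb⟩ := dset_limit_empty hF
      (isSuccLimit_opow one_lt_omega0 hα) h
    obtain ⟨c, hc, hbc⟩ := (lt_opow_of_isSuccLimit omega0_ne_zero hα).1 hb
    refine (ih c hc ε hε F hF ?_).mono (opow_le_opow_right omega0_pos hc.le)
    apply subset_empty_iff.1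
    rw [← hFb]
    exact dset_anti hF hbc.le

end GD

section Main
set_option linter.unusedSectionVars false
variable {K₁ K₂ : Type*} [TopologicalSpace K₁] [CompactSpace K₁] [T2Space K₁]
    [TopologicalSpace K₂] [CompactSpace K₂] [T2Space K₂]

lemma exists_f₀ (T : C(K₁, ℝ) →L[ℝ] C(K₂, ℝ)) {M : ℝ} (hM : 0 ≤ M) (hT : ∀ f, ‖T f‖ ≤ M * ‖f‖)
    (h : C(K₁, ℝ)) (hh : ∀ p, |h p| ≤ 1) (hTh : T h = 1) (x₀ : K₁) (y : K₂) {ε : ℝ} (hε : 0 < ε) :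
    ∃ (f : C(K₁, ℝ)) (U : Set K₁), IsOpen U ∧ x₀ ∈ U ∧ (∀ p, |f p| ≤ 1) ∧ (∀ p ∈ U, f p = 1) ∧
      1 - ε ≤ |T f y| := by
  set η : ℝ := ε / (M + 1) with hη
  have hηpos : 0 < η := by positivity
  have hMη : M * η ≤ ε := by
    rw [hη, mul_div_assoc', div_le_iff₀ (by positivity)]
    nlinarith
  obtain ⟨u, V, hV, hxV, -, hu⟩ := exists_bump (U := {p | |h p - h x₀| < η})
    (isOpen_lt (by fun_prop) continuous_const) (x := x₀) (by simpa using hηpos)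
  set d : C(K₁, ℝ) := h * u - (h x₀) • u with hd
  have hdn : ‖d‖ ≤ η := by
    refine (ContinuousMap.norm_le _ hηpos.le).2 fun p => ?_
    have e : d p = (h p - h x₀) * u p := by
      simp [hd]; ring
    rw [e, Real.norm_eq_abs, abs_mul, abs_of_nonneg (hu.1 p).1]
    by_cases hp : |h p - h x₀| < η
    · have := (hu.1 p).2
      have := (hu.1 p).1
      nlinarith [abs_nonneg (h p - h x₀)]
    · rw [hu.2.2 p hp, mul_zero]; exact hηpos.le
  have hTd : |T d y| ≤ ε := by
    have h2 : |T d y| ≤ ‖T d‖ := ContinuousMap.norm_coe_le_norm (T d) y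
    have h3 := hT d
    nlinarith
  have key : ∀ t : ℝ, T (t • h + (u - t • (h * u))) y =
      t + (1 - t * h x₀) * T u y - t * T d y := by
    intro t
    have e : h * u = d + (h x₀) • u := by rw [hd]; abel
    rw [e]
    simp only [map_add, map_sub, map_smul, hTh, ContinuousMap.add_apply, ContinuousMap.sub_apply,
      ContinuousMap.smul_apply, ContinuousMap.one_apply, _root_.smul_eq_mul]
    ring
  have hval : ∀ t : ℝ, |t| = 1 → (∀ p, |(t • h + (u - t • (h * u))) p| ≤ 1) ∧
      ∀ p ∈ V, (t • h + (u - t • (h * u))) p = 1 := by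
    intro t ht
    have e : ∀ p, (t • h + (u - t • (h * u))) p = t * h p * (1 - u p) + u p := by
      intro p; simp; ring
    refine ⟨fun p => ?_, fun p hp => ?_⟩
    · rw [e]
      have h1 : |t * h p| ≤ 1 := by rw [abs_mul, ht, one_mul]; exact hh p
      rw [abs_le] at h1 ⊢
      have := (hu.1 p).2
      have := (hu.1 p).1
      constructor <;> nlinarith
    · rw [e, hu.2.1 p hp]; ring
  have hb := abs_le.1 (hh x₀)
  have hTd' := abs_le.1 hTd
  rcases le_total 0 (T u y) with hc | hc
  · refine ⟨_, V, hV, hxV, (hval 1 (by simp)).1, (hval 1 (by simp)).2, ?_⟩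
    rw [key]
    refine le_trans ?_ (le_abs_self _)
    nlinarith
  · refine ⟨_, V, hV, hxV, (hval (-1) (by simp)).1, (hval (-1) (by simp)).2, ?_⟩
    rw [key]
    refine le_trans ?_ (neg_le_abs _)
    nlinarith

lemma numeric_step {M A ε n : ℝ} (hn : 2 ≤ n) (hε : 0 < ε) (hA : 1 - ε ≤ A)
    (hP : 1 ≤ (M + A + 3 * ε) / 2) (hQ : 1 ≤ (M - A + 3 * ε) / 2)
    (h : 1 / ((M + A + 3 * ε) / 2) + (n - 1) / ((M - A + 3 * ε) / 2) ≤ 1 + n * ε) :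
    3 ≤ M + 4 * ε ∧
    2 * (M + 4 * ε - 1) + 2 * (n - 1) * (M + 4 * ε + 1) ≤
      (1 + n * ε) * ((M + 4 * ε) ^ 2 - 1) := by
  set R := M + 4 * ε with hR
  set B := A + ε with hB
  have hB1 : 1 ≤ B := by linarith
  have hRB : 2 ≤ R - B := by linarith
  refine ⟨by linarith, ?_⟩
  have e1 : 1 / ((R + B) / 2) ≤ 1 / ((M + A + 3 * ε) / 2) := by
    apply one_div_le_one_div_of_le <;> linarith
  have e2 : (n - 1) / ((M - A + 3 * ε) / 2) = 2 * (n - 1) / (R - B) := by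
    have : R - B = M - A + 3 * ε := by rw [hR, hB]; ring
    rw [this]; field_simp
  have e3 : 1 / ((R + B) / 2) = 2 / (R + B) := by field_simp
  have p1 : 0 < R + B := by linarith
  have p2 : 0 < R - B := by linarith
  have h' : 2 / (R + B) + 2 * (n - 1) / (R - B) ≤ 1 + n * ε := by linarith
  rw [div_add_div _ _ p1.ne' p2.ne', div_le_iff₀ (mul_pos p1 p2)] at h'
  have hc : 0 < 1 + n * ε := by positivity
  -- monotonicity in `B`
  have m1 : 2 / (R + 1) + 2 * (n - 1) / (R - 1) ≤ 2 / (R + B) + 2 * (n - 1) / (R - B) := by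
    have a1 : 2 / (R + 1) - 2 / (R + B) = 2 * (B - 1) / ((R + 1) * (R + B)) := by
      have : R + 1 ≠ 0 := by linarith
      field_simp; ring
    have a2 : 2 / (R - B) - 2 / (R - 1) = 2 * (B - 1) / ((R - 1) * (R - B)) := by
      have : R - 1 ≠ 0 := by intro h; linarith
      field_simp; ring
    have a3 : 2 * (B - 1) / ((R + 1) * (R + B)) ≤ 2 * (B - 1) / ((R - 1) * (R - B)) := by
      apply div_le_div_of_nonneg_left
      · linarith
      · apply mul_pos <;> linarith
      · apply mul_le_mul <;> linarith
    have a4 : 2 / (R - 1) ≤ 2 / (R - B) := by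
      apply div_le_div_of_nonneg_left <;> linarith
    have a5 : 2 * (n - 1) / (R - B) = 2 / (R - B) * (n - 2) + 2 / (R - B) := by ring
    have a6 : 2 * (n - 1) / (R - 1) = 2 / (R - 1) * (n - 2) + 2 / (R - 1) := by ring
    have a7 := mul_le_mul_of_nonneg_right a4 (by linarith : (0 : ℝ) ≤ n - 2)
    linarith
  have h'' : 2 / (R + 1) + 2 * (n - 1) / (R - 1) ≤ 1 + n * ε := by linarith
  have q1 : 0 < R + 1 := by linarith
  have q2 : 0 < R - 1 := by linarith
  rw [div_add_div _ _ q1.ne' q2.ne', div_le_iff₀ (mul_pos q1 q2)] at h''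
  nlinarith

lemma numeric_final {M n : ℝ} (hn : 2 ≤ n)
    (h : ∀ ε : ℝ, 0 < ε → 3 ≤ M + 4 * ε ∧
    2 * (M + 4 * ε - 1) + 2 * (n - 1) * (M + 4 * ε + 1) ≤
      (1 + n * ε) * ((M + 4 * ε) ^ 2 - 1)) :
    n + Real.sqrt ((n - 1) * (n + 3)) ≤ M := by
  have hlim : ∀ f : ℝ → ℝ, Continuous f → Tendsto f (𝓝[>] 0) (𝓝 (f 0)) := fun f hf =>
    hf.continuousAt.tendsto.mono_left nhdsWithin_le_nhds
  have h1 : (3 : ℝ) ≤ M + 4 * 0 :=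
    le_of_tendsto_of_tendsto tendsto_const_nhds (hlim (fun ε => M + 4 * ε) (by fun_prop))
      (by filter_upwards [self_mem_nhdsWithin] with ε hε using (h ε hε).1)
  have h2 := le_of_tendsto_of_tendsto
      (hlim (fun ε => 2 * (M + 4 * ε - 1) + 2 * (n - 1) * (M + 4 * ε + 1)) (by fun_prop))
      (hlim (fun ε => (1 + n * ε) * ((M + 4 * ε) ^ 2 - 1)) (by fun_prop))
      (by filter_upwards [self_mem_nhdsWithin] with ε hε using (h ε hε).2)
  simp only [mul_zero, add_zero] at h1 h2
  have hs : (n - 1) * (n + 3) ≤ (M - n) ^ 2 := by nlinarith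
  have hMn : 0 ≤ M - n := by
    by_contra hc
    push Not at hc
    nlinarith
  have := Real.sqrt_le_sqrt hs
  rw [Real.sqrt_sq hMn] at this
  linarith

lemma core (α : Ordinal.{0}) (n : ℕ) (hn : 2 ≤ n) (x₀ : K₁)
    (hx₀ : x₀ ∈ dset (Set.univ : Set K₁) (ω ^ α * n))
    (y : K₂) (hy : dset (Set.univ : Set K₂) (ω ^ α) = {y})
    (T : C(K₁, ℝ) →L[ℝ] C(K₂, ℝ)) {M : ℝ} (hM : 0 ≤ M) (hT : ∀ f, ‖T f‖ ≤ M * ‖f‖)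
    (hT' : ∀ f, ‖f‖ ≤ ‖T f‖) (h : C(K₁, ℝ)) (hTh : T h = 1) :
    (n : ℝ) + Real.sqrt (((n : ℝ) - 1) * ((n : ℝ) + 3)) ≤ M := by
  have hnR : (2 : ℝ) ≤ n := by exact_mod_cast hn
  refine numeric_final hnR fun ε hε => ?_
  have hh : ∀ p, |h p| ≤ 1 := by
    intro p
    have h1 : |h p| ≤ ‖h‖ := ContinuousMap.norm_coe_le_norm h p
    have h2 := hT' h
    have h3 : ‖(1 : C(K₂, ℝ))‖ ≤ 1 := (ContinuousMap.norm_le _ zero_le_one).2 fun z => by simp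
    rw [hTh] at h2
    linarith
  obtain ⟨f, U, hU, hxU, hf1, hfU, ha⟩ := exists_f₀ T hM hT h hh hTh x₀ y hε
  set a := T f y with haDef
  set F₀ : Set K₂ := {z | ε ≤ |T f z - a|} with hF₀
  have hF₀c : IsClosed F₀ := isClosed_le continuous_const (by fun_prop)
  have hpos : (1 : Ordinal.{0}) ≤ ω ^ α := one_le_iff_pos.2 (opow_pos _ omega0_pos)
  have H : ∀ G ⊆ (Set.univ : Set K₂), IsClosed G → Disjoint G {y} → Good T (ω ^ α) (G ∪ {y}) ε := by
    intro G _ hG hd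
    apply good_opow T α ε hε _ (hG.union isClosed_singleton)
    rw [dset_union hG isClosed_singleton, dset_finite_empty (finite_singleton y) hpos, union_empty]
    apply subset_empty_iff.1
    intro z hz
    refine Set.disjoint_left.1 hd (dset_subset hG _ hz) ?_
    rw [← hy]
    exact dset_mono (subset_univ _) _ hz
  obtain ⟨g, V, x', hV, hxV, hVU, -, hgb, hg1, hg2, hg3⟩ :=
    iterate_good T isClosed_univ H 0 n F₀ (subset_univ _) hF₀c
      (by
        rw [Set.disjoint_singleton_right]
        simp [hF₀, haDef, hε]) x₀ U hU hxU (by rwa [zero_add])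
  set A := |a| with hA
  have hAM : A ≤ M := abs_apply_le T hT hM f hf1 y
  have hA0 : 0 ≤ A := abs_nonneg a
  have hb01 : ∀ i < n, ∀ p, 0 ≤ g i p ∧ g i p ≤ 1 := fun i hi => (hgb i hi).1
  have hf_supp : ∀ i < n, ∀ p, g i p ≠ 0 → f p = 1 := by
    intro i hi p hp
    apply hfU
    by_contra hc
    exact hp ((hgb i hi).2.2 p hc)
  have near : ∀ i < n, ∀ z, ε ≤ |T (g i) z| → |T f z - a| < ε := by
    intro i hi z hz
    by_contra hc
    push Not at hc
    have := hg2 i hi z (Or.inl hc)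
    linarith
  -- `f - 2 g i`
  have b1 : ∀ i < n, ∀ z, |T f z - 2 * T (g i) z| ≤ M := by
    intro i hi z
    have := abs_apply_le T hT hM (f - (2 : ℝ) • g i) (fun p => by
      simp only [ContinuousMap.sub_apply, ContinuousMap.smul_apply, _root_.smul_eq_mul]
      by_cases hp : g i p = 0
      · rw [hp]; simpa using hf1 p
      · rw [hf_supp i hi p hp, abs_le]
        have := hb01 i hi p
        constructor <;> linarith [this.1, this.2]) z
    simpa using this
  -- `f - 2 g 0 + 2 g i`
  have b2 : ∀ i < n, 0 < i → ∀ z, |T f z - 2 * T (g 0) z + 2 * T (g i) z| ≤ M := by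
    intro i hi hi0 z
    have := abs_apply_le T hT hM (f - (2 : ℝ) • g 0 + (2 : ℝ) • g i) (fun p => by
      simp only [ContinuousMap.sub_apply, ContinuousMap.add_apply, ContinuousMap.smul_apply,
        _root_.smul_eq_mul]
      have hi' := hb01 i hi p
      have h0' := hb01 0 (by omega) p
      by_cases hp : g i p = 0
      · by_cases hp0 : g 0 p = 0
        · rw [hp, hp0]; simpa using hf1 p
        · rw [hp, hf_supp 0 (by omega) p hp0, abs_le]
          constructor <;> linarith [h0'.1, h0'.2]
      · rw [hf_supp i hi p hp, hg1 0 i hi0 hi p hp, abs_le]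
        constructor <;> linarith [hi'.1, hi'.2]) z
    simpa using this
  set P := (M + A + 3 * ε) / 2 with hP
  set Q := (M - A + 3 * ε) / 2 with hQ
  have c0 : ∀ z, |T (g 0) z| ≤ P := by
    intro z
    by_cases hz : ε ≤ |T (g 0) z|
    · have h1 := near 0 (by omega) z hz
      have h2 := b1 0 (by omega) z
      have h3 := le_abs_self a
      have h4 := neg_abs_le a
      rw [abs_lt] at h1
      rw [abs_le] at h2
      rw [abs_le]
      constructor <;> linarith [h1.1, h1.2, h2.1, h2.2]
    · push Not at hz
      linarith
  have ci : ∀ i < n, 0 < i → ∀ z, |T (g i) z| ≤ Q := by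
    intro i hi hi0 z
    by_cases hz : ε ≤ |T (g i) z|
    · have h1 := abs_lt.1 (near i hi z hz)
      have h2 := abs_le.1 (b1 i hi z)
      have h3 := abs_le.1 (b2 i hi hi0 z)
      have h0 : |T (g 0) z| < ε := by
        by_contra hc
        push Not at hc
        have := hg3 z (mem_univ z) 0 i hi0 hi hc
        linarith
      rw [abs_lt] at h0
      have hA' : A = a ∨ A = -a := by rw [hA]; exact abs_choice a
      rw [abs_le]
      rcases hA' with hA' | hA' <;>
        constructor <;> linarith [h1.1, h1.2, h2.1, h2.2, h0.1, h0.2, h3.1, h3.2]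
    · push Not at hz
      linarith
  have hone : ∀ i < n, 1 ≤ ‖T (g i)‖ := by
    intro i hi
    refine le_trans ?_ (hT' _)
    have h1 : |g i x'| ≤ ‖g i‖ := ContinuousMap.norm_coe_le_norm (g i) x'
    rw [(hgb i hi).2.1 x' hxV] at h1
    simpa using h1
  have hP1 : 1 ≤ P := (hone 0 (by omega)).trans
    ((ContinuousMap.norm_le _ (by linarith)).2 c0)
  have hQ1 : 1 ≤ Q := (hone 1 (by omega)).trans
    ((ContinuousMap.norm_le _ (by linarith)).2 (ci 1 (by omega) one_pos))
  refine numeric_step (A := A) hnR hε ha hP1 hQ1 ?_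
  rw [← hP, ← hQ]
  -- the test function
  set c : ℕ → ℝ := fun i => if i = 0 then 1 / P else 1 / Q with hc
  have hc0 : ∀ i, 0 ≤ c i ∧ c i ≤ 1 := by
    intro i
    simp only [hc]
    split_ifs
    · exact ⟨by positivity, by rw [div_le_one (by linarith)]; exact hP1⟩
    · exact ⟨by positivity, by rw [div_le_one (by linarith)]; exact hQ1⟩
  have hsumc : ∑ i ∈ Finset.range n, c i = 1 / P + (n - 1) / Q := by
    obtain ⟨m, rfl⟩ : ∃ m, n = m + 1 := ⟨n - 1, by omega⟩
    rw [Finset.sum_range_succ']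
    simp [hc]
    ring
  set G : C(K₁, ℝ) := ∑ i ∈ Finset.range n, c i • g i with hG
  have hGx : G x' = 1 / P + (n - 1) / Q := by
    rw [← hsumc, hG, ContinuousMap.sum_apply]
    refine Finset.sum_congr rfl fun i hi => ?_
    rw [ContinuousMap.smul_apply, (hgb i (Finset.mem_range.1 hi)).2.1 x' hxV]
    simp
  have hTG : ‖T G‖ ≤ 1 + n * ε := by
    refine (ContinuousMap.norm_le _ (by positivity)).2 fun z => ?_
    rw [hG, map_sum, ContinuousMap.sum_apply, Real.norm_eq_abs]
    refine (Finset.abs_sum_le_sum_abs _ _).trans ?_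
    have e : ∀ i, |T (c i • g i) z| = c i * |T (g i) z| := by
      intro i
      rw [map_smul, ContinuousMap.smul_apply, _root_.smul_eq_mul, abs_mul, abs_of_nonneg (hc0 i).1]
    simp only [e]
    refine sum_one_big hε.le zero_le_one (fun i hi => ?_) (fun i j hij hj hεi => ?_)
    · rcases Nat.eq_zero_or_pos i with h0 | h0
      · subst h0
        simp only [hc, if_true]
        rw [one_div, inv_mul_le_iff₀ (by linarith), mul_one]
        exact c0 z
      · simp only [hc, h0.ne', if_false]
        rw [one_div, inv_mul_le_iff₀ (by linarith), mul_one]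
        exact ci i hi h0 z
    · have h1 : ε ≤ |T (g i) z| := by
        have := hc0 i
        nlinarith [abs_nonneg (T (g i) z)]
      have h2 := hg3 z (mem_univ z) i j hij hj h1
      have := hc0 j
      nlinarith [abs_nonneg (T (g j) z)]
  have h1 : G x' ≤ ‖G‖ := (le_abs_self _).trans (ContinuousMap.norm_coe_le_norm G x')
  have h2 := hT' G
  linarith

end Main

/-- If `K₁`, `K₂` are scattered compact Hausdorff spaces with `ht(K₁) > ω^α·n`
(`n ≥ 2`) and `K₂^(ω^α) = {y}`, then every surjective linear isomorphism
`T : C(K₁) → C(K₂)` satisfies `‖T‖·‖T⁻¹‖ ≥ n + √((n-1)(n+3))`. -/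
theorem stmt_19 {K₁ K₂ : Type*} [TopologicalSpace K₁] [CompactSpace K₁] [T2Space K₁]
    [TopologicalSpace K₂] [CompactSpace K₂] [T2Space K₂]
    (hs₁ : Scattered K₁) (hs₂ : Scattered K₂)
    (α : Ordinal.{0}) (n : ℕ) (hn : 2 ≤ n)
    (hht : ω ^ α * n < cbHeight K₁)
    (y : K₂) (hy : cbDeriv K₂ (ω ^ α) = {y}) :
    ∀ T : C(K₁, ℝ) ≃L[ℝ] C(K₂, ℝ),
      (n : ℝ) + Real.sqrt (((n : ℝ) - 1) * ((n : ℝ) + 3)) ≤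
        ‖(T : C(K₁, ℝ) →L[ℝ] C(K₂, ℝ))‖ * ‖(T.symm : C(K₂, ℝ) →L[ℝ] C(K₁, ℝ))‖ := by
  intro T
  have hne : (dset (Set.univ : Set K₁) (ω ^ α * n)).Nonempty := by
    rw [Set.nonempty_iff_ne_empty]
    intro h
    have : cbHeight K₁ ≤ ω ^ α * n := csInf_le' h
    exact absurd hht (not_lt.2 this)
  obtain ⟨x₀, hx₀⟩ := hne
  set S : C(K₂, ℝ) →L[ℝ] C(K₁, ℝ) := (T.symm : C(K₂, ℝ) →L[ℝ] C(K₁, ℝ)) with hS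
  set T' : C(K₁, ℝ) →L[ℝ] C(K₂, ℝ) := (T : C(K₁, ℝ) →L[ℝ] C(K₂, ℝ)) with hT'
  have hST : ∀ f, S (T' f) = f := fun f => T.symm_apply_apply f
  have hTS : ∀ f, T' (S f) = f := fun f => T.apply_symm_apply f
  have hs : 0 < ‖S‖ := by
    refine lt_of_le_of_ne S.opNorm_nonneg fun h0 => ?_
    have h1 := S.le_opNorm (T' 1)
    rw [← h0, hST, zero_mul] at h1
    have h2 : |(1 : C(K₁, ℝ)) x₀| ≤ ‖(1 : C(K₁, ℝ))‖ := ContinuousMap.norm_coe_le_norm (1 : C(K₁, ℝ)) x₀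
    simp at h2
    linarith
  refine core α n hn x₀ hx₀ y hy (‖S‖ • T') (M := ‖T'‖ * ‖S‖)
    (mul_nonneg T'.opNorm_nonneg hs.le) (fun f => ?_) (fun f => ?_) (‖S‖⁻¹ • S 1) ?_
  · rw [ContinuousLinearMap.smul_apply, norm_smul, Real.norm_of_nonneg hs.le]
    have := T'.le_opNorm f
    nlinarith
  · rw [ContinuousLinearMap.smul_apply, norm_smul, Real.norm_of_nonneg hs.le]
    have := S.le_opNorm (T' f)
    rwa [hST] at this
  · rw [ContinuousLinearMap.smul_apply, map_smul, hTS, smul_smul, mul_inv_cancel₀ hs.ne', one_smul]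
end
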